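/- arXiv:2602.20358 — 2 statements merged into one kernel-verified Lean document; each statement's English description precedes it below -/
import Mathlib

section
/- Let A and P be finite sets with |A| = |P| = c ≥ 2, and let Z ⊆ A × P with |Z| ≤ 2c − 2. Suppose every a ∈ A occurs in at least one pair of Z and every p ∈ P occurs in at least one pair of Z. Then there exist a ∈ A and p ∈ P such that a occurs in exactly one pair of Z, p occurs in exactly one pair of Z, and (a,p) ∉ Z. -/
/-!
Count degrees in the bipartite graph `Z`. A side with `m` vertices, all of positive degree, has at
least `2m - |Z|` vertices of degree one, because every other vertex uses up at least two edges.
Thus there are two leaves among the applicants and one among the positions. The leaf position has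
a single neighbour, and at least one of the two leaf applicants is not it.
-/

section LeafCount

open Finset

theorem two_mul_card_le_sum_add_card_filter_eq_one {ι : Type*} (s : Finset ι) (f : ι → ℕ)
    (hf : ∀ i ∈ s, 0 < f i) : 2 * #s ≤ ∑ i ∈ s, f i + #{i ∈ s | f i = 1} := by
  have two_le (i : ι) (hi : i ∈ s) : 2 ≤ f i + if f i = 1 then 1 else 0 := by
    have := hf i hi
    split_ifs <;> omega
  calc
    2 * #s = ∑ _i ∈ s, 2 := by rw [sum_const, smul_eq_mul, mul_comm]
    _ ≤ ∑ i ∈ s, (f i + if f i = 1 then 1 else 0) := sum_le_sum two_le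
    _ = ∑ i ∈ s, f i + #{i ∈ s | f i = 1} := by rw [sum_add_distrib, card_filter]

theorem two_mul_card_le_card_add_card_filter_card_fiber_eq_one {α β : Type*} [DecidableEq β]
    {s : Finset α} {t : Finset β} {g : α → β} (hg : Set.SurjOn g s t) :
    2 * #t ≤ #s + #{b ∈ t | #{x ∈ s | g x = b} = 1} := by
  have fiber_pos (b : β) (hb : b ∈ t) : 0 < #{x ∈ s | g x = b} := by
    obtain ⟨x, hx, hxb⟩ := hg hb
    exact card_pos.mpr ⟨x, mem_filter.mpr ⟨hx, hxb⟩⟩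
  calc
    2 * #t ≤ ∑ b ∈ t, #{x ∈ s | g x = b} + #{b ∈ t | #{x ∈ s | g x = b} = 1} :=
      two_mul_card_le_sum_add_card_filter_eq_one t _ fiber_pos
    _ ≤ #s + #{b ∈ t | #{x ∈ s | g x = b} = 1} := by
      gcongr
      exact (sum_card_fiberwise_eq_card_filter s t g).trans_le (card_filter_le s _)

variable {A P : Type*} [DecidableEq P]

theorem exists_mem_pair_notMem_of_card_filter_snd_eq_one {Z : Finset (A × P)} {p : P}
    (hp : #{z ∈ Z | z.2 = p} = 1) {L : Finset A} (hL : 1 < #L) : ∃ a ∈ L, (a, p) ∉ Z := by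
  obtain ⟨⟨b, q⟩, hfiber⟩ := card_eq_one.mp hp
  obtain ⟨a, haL, hab⟩ := exists_mem_ne hL b
  refine ⟨a, haL, fun hap ↦ hab ?_⟩
  have : (a, p) ∈ ({(b, q)} : Finset (A × P)) := hfiber ▸ mem_filter.mpr ⟨hap, rfl⟩
  exact congrArg Prod.fst (mem_singleton.mp this)

theorem stmt_11_general [Fintype A] [Fintype P] [DecidableEq A] {Z : Finset (A × P)}
    (hZA : #Z + 2 ≤ 2 * Fintype.card A) (hZP : #Z + 1 ≤ 2 * Fintype.card P)
    (hAcov : ∀ a : A, ∃ p : P, (a, p) ∈ Z) (hPcov : ∀ p : P, ∃ a : A, (a, p) ∈ Z) :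
    ∃ a : A, ∃ p : P, #{z ∈ Z | z.1 = a} = 1 ∧ #{z ∈ Z | z.2 = p} = 1 ∧ (a, p) ∉ Z := by
  have surjOn_fst : Set.SurjOn Prod.fst (Z : Set (A × P)) (univ : Finset A) := fun a _ ↦
    let ⟨p, hap⟩ := hAcov a
    ⟨(a, p), hap, rfl⟩
  have surjOn_snd : Set.SurjOn Prod.snd (Z : Set (A × P)) (univ : Finset P) := fun p _ ↦
    let ⟨a, hap⟩ := hPcov p
    ⟨(a, p), hap, rfl⟩
  have countA := two_mul_card_le_card_add_card_filter_card_fiber_eq_one surjOn_fst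
  have countP := two_mul_card_le_card_add_card_filter_card_fiber_eq_one surjOn_snd
  rw [card_univ] at countA countP
  have two_leaves : 1 < #{a : A | #{z ∈ Z | z.1 = a} = 1} := by omega
  have one_leaf : 0 < #{p : P | #{z ∈ Z | z.2 = p} = 1} := by omega
  obtain ⟨p, hp⟩ := card_pos.mp one_leaf
  replace hp := (mem_filter_univ p).mp hp
  obtain ⟨a, ha, hap⟩ := exists_mem_pair_notMem_of_card_filter_snd_eq_one hp two_leaves
  exact ⟨a, p, (mem_filter_univ a).mp ha, hp, hap⟩

end LeafCount

/-- Combinatorial core of Proposition `lower-bound-iid`: if `|A| = |P| = c ≥ 2`,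
`Z ⊆ A × P` has at most `2c − 2` elements, and every applicant and every position
occurs in at least one pair of `Z`, then there exist an applicant `a` and a position
`p` each occurring in exactly one pair of `Z`, with `(a, p) ∉ Z`. -/
theorem stmt_11 {A P : Type*} [Fintype A] [Fintype P] [DecidableEq A] [DecidableEq P]
    (c : ℕ) (hc : 2 ≤ c) (hA : Fintype.card A = c) (hP : Fintype.card P = c)
    (Z : Finset (A × P)) (hZ : Z.card ≤ 2 * c - 2)
    (hAcov : ∀ a : A, ∃ p : P, (a, p) ∈ Z)
    (hPcov : ∀ p : P, ∃ a : A, (a, p) ∈ Z) :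
    ∃ a : A, ∃ p : P,
      (Z.filter (fun z => z.1 = a)).card = 1 ∧
      (Z.filter (fun z => z.2 = p)).card = 1 ∧
      (a, p) ∉ Z :=
  stmt_11_general (by omega) (by omega) hAcov hPcov
end

section
/- Let 𝒜 and 𝒫 be finite disjoint sets, Z ⊆ 𝒜 × 𝒫, and let v : 𝒜 × 𝒫 → ℝ, u : 𝒫 × 𝒜 → ℝ be interim-utility functions for which there are constants V and U with v(a,p) = V and u(p,a) = U for every pair (a,p) ∉ Z. Let μ be a matching in which every matched pair belongs to Z. Suppose a ∈ 𝒜 occurs in exactly one pair (a, p₀) of Z and v(a, p₀) < V, suppose p ∈ 𝒫 occurs in exactly one pair (a₁, p) of Z and u(p, a₁) < U, and suppose (a, p) ∉ Z. Then (a, p) is a blocking pair for μ; in particular μ is not interim stable given Z. -/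
/-- A matching on disjoint sets of applicants `A` and positions `P`: each applicant is
matched to a position or to herself, each position to an applicant or to itself, and
the matching is involutive. -/
def IsMatching {A P : Type*} (μ : A ⊕ P → A ⊕ P) : Prop :=
  (∀ a : A, (∃ p : P, μ (Sum.inl a) = Sum.inr p) ∨ μ (Sum.inl a) = Sum.inl a) ∧
  (∀ p : P, (∃ a : A, μ (Sum.inr p) = Sum.inl a) ∨ μ (Sum.inr p) = Sum.inr p) ∧
  (∀ x, μ (μ x) = x)

/-- `(a, p)` is a blocking pair for `μ` with respect to interim utilities `v`, `u`:
they are not matched to each other, `a` is unmatched or strictly prefers `p` to her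
match, and `p` is unmatched or strictly prefers `a` to its match. -/
def IsBlockingPair {A P : Type*} (μ : A ⊕ P → A ⊕ P)
    (v : A → P → ℝ) (u : P → A → ℝ) (a : A) (p : P) : Prop :=
  μ (Sum.inl a) ≠ Sum.inr p ∧
  (μ (Sum.inl a) = Sum.inl a ∨ ∃ p', μ (Sum.inl a) = Sum.inr p' ∧ v a p > v a p') ∧
  (μ (Sum.inr p) = Sum.inr p ∨ ∃ a', μ (Sum.inr p) = Sum.inl a' ∧ u p a > u p a')

/-- `μ` is a stable matching with respect to `v`, `u`. -/
def IsStable {A P : Type*} (μ : A ⊕ P → A ⊕ P)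
    (v : A → P → ℝ) (u : P → A → ℝ) : Prop :=
  IsMatching μ ∧ ∀ a p, ¬ IsBlockingPair μ v u a p

/-- `μ` is interim stable given a set `Z` of interviewed pairs: it is a stable matching
and every matched pair has interviewed. -/
def InterimStable {A P : Type*} (μ : A ⊕ P → A ⊕ P) (Z : Set (A × P))
    (v : A → P → ℝ) (u : P → A → ℝ) : Prop :=
  IsMatching μ ∧ (∀ a p, μ (Sum.inl a) = Sum.inr p → (a, p) ∈ Z) ∧
  ∀ a p, ¬ IsBlockingPair μ v u a p

namespace IsMatching

variable {A P : Type*} {μ : A ⊕ P → A ⊕ P}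

theorem apply_inr_eq_inl_iff (hμ : IsMatching μ) {a : A} {p : P} :
    μ (Sum.inr p) = Sum.inl a ↔ μ (Sum.inl a) = Sum.inr p :=
  have hinv : Function.Involutive μ := hμ.2.2
  hinv.eq_iff.trans eq_comm

theorem inl_unmatched_or_exists_iff (hμ : IsMatching μ) {a : A} {q : P → Prop} :
    (μ (Sum.inl a) = Sum.inl a ∨ ∃ p, μ (Sum.inl a) = Sum.inr p ∧ q p) ↔
      ∀ p, μ (Sum.inl a) = Sum.inr p → q p := by
  obtain ⟨p, hp⟩ | ha := hμ.1 a
  · simp [hp]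
  · simp [ha]

theorem inr_unmatched_or_exists_iff (hμ : IsMatching μ) {p : P} {q : A → Prop} :
    (μ (Sum.inr p) = Sum.inr p ∨ ∃ a, μ (Sum.inr p) = Sum.inl a ∧ q a) ↔
      ∀ a, μ (Sum.inl a) = Sum.inr p → q a := by
  simp only [← hμ.apply_inr_eq_inl_iff]
  obtain ⟨a, ha⟩ | hp := hμ.2.1 p
  · simp [ha]
  · simp [hp]

theorem isBlockingPair_iff (hμ : IsMatching μ) {v : A → P → ℝ} {u : P → A → ℝ} {a : A} {p : P} :
    IsBlockingPair μ v u a p ↔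
      (∀ p', μ (Sum.inl a) = Sum.inr p' → v a p' < v a p) ∧
        ∀ a', μ (Sum.inl a') = Sum.inr p → u p a' < u p a := by
  rw [IsBlockingPair, hμ.inl_unmatched_or_exists_iff, hμ.inr_unmatched_or_exists_iff]
  -- If `a` and `p` were matched, the preference of `a` would read `v a p < v a p`.
  exact and_iff_right_of_imp fun h hap => lt_irrefl _ (h.1 p hap)

end IsMatching

theorem stmt_16_general {A P : Type*} (Z : Set (A × P)) (v : A → P → ℝ) (u : P → A → ℝ)
    (μ : A ⊕ P → A ⊕ P) (hμ : IsMatching μ)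
    (hμZ : ∀ a p, μ (Sum.inl a) = Sum.inr p → (a, p) ∈ Z) (a : A) (p : P)
    (hva : ∀ p', (a, p') ∈ Z → v a p' < v a p)
    (hup : ∀ a', (a', p) ∈ Z → u p a' < u p a) :
    IsBlockingPair μ v u a p ∧ ¬ InterimStable μ Z v u := by
  have hblock : IsBlockingPair μ v u a p :=
    hμ.isBlockingPair_iff.2
      ⟨fun p' hp' => hva p' (hμZ a p' hp'), fun a' ha' => hup a' (hμZ a' p ha')⟩
  exact ⟨hblock, fun ⟨_, _, hstable⟩ => hstable a p hblock⟩

/-- The sufficient condition for interim instability used in Proposition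
`lower-bound-iid`: in an ex-ante equivalent setting, if applicant `a` has exactly one
interview `(a, p₀)` with realized value below the prior `V`, position `p` has exactly
one interview `(a₁, p)` with realized value below the prior `U`, and `a` and `p` did
not interview each other, then `(a, p)` is a blocking pair for any matching `μ` all of
whose matched pairs interviewed; in particular `μ` is not interim stable given `Z`. -/
theorem stmt_16 {A P : Type*} [Fintype A] [Fintype P]
    (Z : Set (A × P)) (v : A → P → ℝ) (u : P → A → ℝ)
    (V U : ℝ)
    (hvV : ∀ a : A, ∀ p : P, (a, p) ∉ Z → v a p = V)
    (huU : ∀ a : A, ∀ p : P, (a, p) ∉ Z → u p a = U)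
    (μ : A ⊕ P → A ⊕ P) (hμ : IsMatching μ)
    (hμZ : ∀ a p, μ (Sum.inl a) = Sum.inr p → (a, p) ∈ Z)
    (a : A) (p₀ : P) (hap₀ : (a, p₀) ∈ Z)
    (ha1 : ∀ p' : P, (a, p') ∈ Z → p' = p₀)
    (hva : v a p₀ < V)
    (p : P) (a₁ : A) (ha₁p : (a₁, p) ∈ Z)
    (hp1 : ∀ a' : A, (a', p) ∈ Z → a' = a₁)
    (hup : u p a₁ < U)
    (hnotZ : (a, p) ∉ Z) :
    IsBlockingPair μ v u a p ∧ ¬ InterimStable μ Z v u :=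
  stmt_16_general Z v u μ hμ hμZ a p
    (fun p' hp' => by rwa [ha1 p' hp', hvV a p hnotZ])
    (fun a' ha' => by rwa [hp1 a' ha', huU a p hnotZ])
end
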